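/- Let (X_n, p_{n+1}) and (Y_n, q_{n+1}) be towers of fibrations of topological spaces, and let (f_n : X_n → Y_n)_{n ≥ 0} be a map of towers such that every f_n is a weak homotopy equivalence. If the inverse limit lim_n Y_n is nonempty, then the inverse limit lim_n X_n is nonempty. -/

import Mathlib

open scoped unitInterval Topology Topology.Homotopy

noncomputable section

/-- A map is a *Serre fibration* if it has the homotopy lifting property
with respect to all cubes `I^k`. -/
def IsSerreFibration {E B : Type} [TopologicalSpace E] [TopologicalSpace B]
    (p : C(E, B)) : Prop :=
  ∀ (k : ℕ) (f : C((Fin k → I), E)) (H : C(I × (Fin k → I), B)),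
    (∀ q, H (0, q) = p (f q)) →
      ∃ G : C(I × (Fin k → I), E),
        (∀ q, G (0, q) = f q) ∧ ∀ z, p (G z) = H z

/-- The inverse limit of a tower of spaces. -/
def TowerLim (X : ℕ → Type) [∀ n, TopologicalSpace (X n)]
    (p : ∀ n, C(X (n + 1), X n)) : Type :=
  { z : ∀ n, X n // ∀ n, p n (z (n + 1)) = z n }

instance {X : ℕ → Type} [∀ n, TopologicalSpace (X n)] (p : ∀ n, C(X (n + 1), X n)) :
    TopologicalSpace (TowerLim X p) :=
  instTopologicalSpaceSubtype

/-- The projection from the inverse limit of a tower to the `n`th space. -/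
def TowerLim.proj {X : ℕ → Type} [∀ n, TopologicalSpace (X n)]
    {p : ∀ n, C(X (n + 1), X n)} (n : ℕ) : C(TowerLim X p, X n) :=
  ⟨fun z => z.1 n, (continuous_apply n).comp continuous_subtype_val⟩

/-- The map induced on homotopy groups (in particular on `π_k` for `N = Fin k`)
by a continuous map `f` with `f x = y`. -/
def piMap {X Y : Type} [TopologicalSpace X] [TopologicalSpace Y] (N : Type)
    (f : C(X, Y)) {x : X} {y : Y} (hf : f x = y) :
    HomotopyGroup N X x → HomotopyGroup N Y y :=
  Quotient.map
    (fun g => (⟨f.comp g.1, fun q hq => by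
        rw [ContinuousMap.comp_apply, g.2 q hq, hf]⟩ : GenLoop N Y y))
    (fun g h H => H.map fun F => F.compContinuousMap f)

/-- The map induced on path components by a continuous map. -/
def pi0Map {X Y : Type} [TopologicalSpace X] [TopologicalSpace Y] (f : C(X, Y)) :
    ZerothHomotopy X → ZerothHomotopy Y :=
  Quotient.map (fun z => f z)
    (fun a b h => Nonempty.map (fun γ : Path a b => γ.map f.continuous) h)

/-- A continuous map is a *weak homotopy equivalence* if it induces a bijection on path
components and, for every basepoint `x` and every `k ≥ 1`, an isomorphism
`π_k (X, x) → π_k (Y, f x)`. -/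
def IsWeakHomotopyEquiv {X Y : Type} [TopologicalSpace X] [TopologicalSpace Y]
    (f : C(X, Y)) : Prop :=
  Function.Bijective (pi0Map f) ∧
    ∀ (x : X) (k : ℕ), 1 ≤ k →
      Function.Bijective (piMap (Fin k) f (x := x) (y := f x) rfl)

/-- The map induced on inverse limits by a map of towers. -/
def towerMap {X Y : ℕ → Type} [∀ n, TopologicalSpace (X n)] [∀ n, TopologicalSpace (Y n)]
    (p : ∀ n, C(X (n + 1), X n)) (q : ∀ n, C(Y (n + 1), Y n))
    (f : ∀ n, C(X n, Y n)) (hf : ∀ n z, q n (f (n + 1) z) = f n (p n z)) :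
    C(TowerLim X p, TowerLim Y q) :=
  ⟨fun z => ⟨fun n => f n (z.1 n), fun n => by rw [hf n, z.2 n]⟩,
    Continuous.subtype_mk
      (continuous_pi fun n => (f n).continuous.comp
        ((continuous_apply n).comp continuous_subtype_val)) _⟩

/-- A Serre fibration lifts paths up to path components. -/
theorem IsSerreFibration.exists_joined {E B : Type} [TopologicalSpace E] [TopologicalSpace B]
    {p : C(E, B)} (hp : IsSerreFibration p) {e : E} {b : B} (h : Joined (p e) b) :
    ∃ e', p e' = b ∧ Joined e e' := by
  obtain ⟨γ⟩ := h
  obtain ⟨G, hG0, hG⟩ := hp 0 (ContinuousMap.const _ e)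
    ⟨fun z => γ z.1, γ.continuous.comp continuous_fst⟩ (fun q => by simp)
  refine ⟨G (1, default), by rw [hG]; simp, ⟨⟨⟨fun t => G (t, default), by fun_prop⟩, ?_, rfl⟩⟩⟩
  exact hG0 _

theorem pi0_joined_of_joined {X Y : Type} [TopologicalSpace X] [TopologicalSpace Y]
    {f : C(X, Y)} (hf : IsWeakHomotopyEquiv f) {a b : X} (h : Joined (f a) (f b)) :
    Joined a b :=
  Quotient.exact (hf.1.1 (a₁ := Quotient.mk _ a) (a₂ := Quotient.mk _ b) (Quotient.sound h))

theorem exists_joined_of_weakEquiv {X Y : Type} [TopologicalSpace X] [TopologicalSpace Y]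
    {f : C(X, Y)} (hf : IsWeakHomotopyEquiv f) (y : Y) : ∃ x, Joined (f x) y := by
  obtain ⟨a, ha⟩ := hf.1.2 (Quotient.mk _ y)
  induction a using Quotient.inductionOn with
  | h x => exact ⟨x, Quotient.exact ha⟩

/-- If `(f n : X n → Y n)` is a map of towers of fibrations of topological spaces such that
every `f n` is a weak homotopy equivalence, and the inverse limit of the tower `Y` is
nonempty, then the inverse limit of the tower `X` is nonempty. -/
theorem towerLim_nonempty_of_towerLim_nonempty
    (X Y : ℕ → Type) [∀ n, TopologicalSpace (X n)] [∀ n, TopologicalSpace (Y n)]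
    (p : ∀ n, C(X (n + 1), X n)) (q : ∀ n, C(Y (n + 1), Y n))
    (hp : ∀ n, IsSerreFibration (p n)) (hq : ∀ n, IsSerreFibration (q n))
    (f : ∀ n, C(X n, Y n)) (hf : ∀ n z, q n (f (n + 1) z) = f n (p n z))
    (hwe : ∀ n, IsWeakHomotopyEquiv (f n))
    (hY : Nonempty (TowerLim Y q)) :
    Nonempty (TowerLim X p) := by
  obtain ⟨y, hy⟩ := hY
  have joined_map : ∀ {A B : Type} [TopologicalSpace A] [TopologicalSpace B] (g : C(A, B))
      {a b : A}, Joined a b → Joined (g a) (g b) :=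
    fun g _ _ h => h.map g.continuous
  have step : ∀ n (x : {x : X n // Joined (f n x) (y n)}),
      ∃ x' : {x : X (n + 1) // Joined (f (n + 1) x) (y (n + 1))}, p n x'.1 = x.1 := by
    rintro n ⟨x, hx⟩
    obtain ⟨x', hx'⟩ := exists_joined_of_weakEquiv (hwe (n + 1)) (y (n + 1))
    have h1 := joined_map (q n) hx'
    rw [hf, hy] at h1
    obtain ⟨e, he, hj⟩ := (hp n).exists_joined
      (pi0_joined_of_joined (hwe n) (h1.trans hx.symm))
    exact ⟨⟨e, (joined_map (f (n + 1)) hj).symm.trans hx'⟩, he⟩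
  choose s hs using step
  obtain ⟨x0, hx0⟩ := exists_joined_of_weakEquiv (hwe 0) (y 0)
  let z : ∀ n, {x : X n // Joined (f n x) (y n)} := fun n => Nat.rec ⟨x0, hx0⟩ (fun n x => s n x) n
  exact ⟨⟨fun n => (z n).1, fun n => hs n (z n)⟩⟩

end
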